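/- Let P be a consensus matrix satisfying P*P = PP*, with C_{P*P} := n PᵀΠP. Then J(P) ≥ (π_min³ n² / π_max) · R̄(C_{P*P}) and J_w(P) ≥ π_min³ n³ · R̄(C_{P*P}). -/

import Mathlib

open Matrix

/-- A consensus matrix: entrywise nonnegative, row-stochastic, irreducible
(for every pair of indices some power has a positive entry), with positive diagonal. -/
def IsConsensus {n : ℕ} (P : Matrix (Fin n) (Fin n) ℝ) : Prop :=
  (∀ i j, 0 ≤ P i j) ∧ (∀ i, (∑ j, P i j) = 1) ∧
  (∀ i j, ∃ k : ℕ, 0 < (P ^ k) i j) ∧ (∀ i, 0 < P i i)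

/-- `mu` is the invariant measure of `P`: strictly positive, sums to `1`,
and is a left fixed vector of `P`. -/
def IsInvMeasure {n : ℕ} (P : Matrix (Fin n) (Fin n) ℝ) (mu : Fin n → ℝ) : Prop :=
  (∀ i, 0 < mu i) ∧ (∑ i, mu i) = 1 ∧ (∀ j, (∑ i, mu i * P i j) = mu j)

/-- The time reversal `P* = Π⁻¹ Pᵀ Π` with `Π = diag(mu)`. -/
noncomputable def Pstar {n : ℕ} (P : Matrix (Fin n) (Fin n) ℝ) (mu : Fin n → ℝ) :
    Matrix (Fin n) (Fin n) ℝ :=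
  Matrix.diagonal (fun i => (mu i)⁻¹) * Pᵀ * Matrix.diagonal mu

/-- The graph Laplacian `L(C) = diag(C 𝟙) − C`. -/
def lap {n : ℕ} (C : Matrix (Fin n) (Fin n) ℝ) : Matrix (Fin n) (Fin n) ℝ :=
  Matrix.diagonal (fun i => ∑ j, C i j) - C

/-- A conductance matrix: symmetric, entrywise nonnegative, irreducible. -/
def IsConductance {n : ℕ} (C : Matrix (Fin n) (Fin n) ℝ) : Prop :=
  Cᵀ = C ∧ (∀ i j, 0 ≤ C i j) ∧ (∀ i j, ∃ k : ℕ, 0 < (C ^ k) i j)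

/-- The effective resistance between `a` and `b`: `v a - v b` for a solution `v`
of `L(C) v = e_a - e_b` (junk value `0` if no solution exists). -/
noncomputable def effRes {n : ℕ} (C : Matrix (Fin n) (Fin n) ℝ) (a b : Fin n) : ℝ :=
  open Classical in
  if h : ∃ v : Fin n → ℝ, lap C *ᵥ v = Pi.single a 1 - Pi.single b 1 then
    h.choose a - h.choose b
  else 0

/-- The average effective resistance `(1/(2 n²)) Σ_{u,v} R_{uv}(C)`. -/
noncomputable def avgRes {n : ℕ} (C : Matrix (Fin n) (Fin n) ℝ) : ℝ :=
  (1 / (2 * (n : ℝ) ^ 2)) * ∑ u, ∑ v, effRes C u v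

/-- The unit-conductance matrix of the undirected graph associated with `P`:
edge `{u,v}` iff `P u v ≠ 0` or `P v u ≠ 0`. -/
noncomputable def adjMat {n : ℕ} (P : Matrix (Fin n) (Fin n) ℝ) : Matrix (Fin n) (Fin n) ℝ :=
  Matrix.of fun i j => if i ≠ j ∧ (P i j ≠ 0 ∨ P j i ≠ 0) then (1 : ℝ) else 0

/-- The LQ cost `J(P) = (1/n) Σ_{t≥0} ‖P^t − 𝟙 muᵀ‖_F²`. -/
noncomputable def LQcost {n : ℕ} (P : Matrix (Fin n) (Fin n) ℝ) (mu : Fin n → ℝ) : ℝ :=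
  (1 / (n : ℝ)) *
    ∑' t : ℕ, ∑ i, ∑ j,
      ((P ^ t - Matrix.vecMulVec (fun _ => 1) mu : Matrix (Fin n) (Fin n) ℝ) i j) ^ 2

/-- The weighted LQ cost `J_w(P)`. -/
noncomputable def LQcostW {n : ℕ} (P : Matrix (Fin n) (Fin n) ℝ) (mu : Fin n → ℝ) : ℝ :=
  ∑' t : ℕ, Matrix.trace ((1 - Matrix.vecMulVec mu (fun _ => 1)) * Pᵀ ^ t *
    Matrix.diagonal mu * P ^ t * (1 - Matrix.vecMulVec (fun _ => 1) mu))

/-- The Green matrix `G(P) = Σ_{t≥0} (P^t − 𝟙 muᵀ)`. -/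
noncomputable def Green {n : ℕ} (P : Matrix (Fin n) (Fin n) ℝ) (mu : Fin n → ℝ) :
    Matrix (Fin n) (Fin n) ℝ :=
  ∑' t : ℕ, (P ^ t - Matrix.vecMulVec (fun _ => 1) mu)

/-- Out-degree (excluding self-loops) of node `i` in the directed graph of `P`. -/
noncomputable def outDeg {n : ℕ} (P : Matrix (Fin n) (Fin n) ℝ) (i : Fin n) : ℕ :=
  (Finset.univ.filter fun j => j ≠ i ∧ P i j ≠ 0).card

/-- In-degree (excluding self-loops) of node `j` in the directed graph of `P`. -/
noncomputable def inDeg {n : ℕ} (P : Matrix (Fin n) (Fin n) ℝ) (j : Fin n) : ℕ :=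
  (Finset.univ.filter fun i => i ≠ j ∧ P i j ≠ 0).card

/-!
Write `E = 𝟙 πᵀ` and `Q = P* P`. Then `Q` is a consensus matrix with invariant measure `π`, and
`Π Q = Pᵀ Π P`. When `P*` and `P` commute, `Π Q ^ t = (P ^ t)ᵀ Π P ^ t`, hence
`Π (Q ^ t - E) = (P ^ t - E)ᵀ Π (P ^ t - E)`. Summing over `t` gives `J_w(P) = tr (Π G(Q))`,
where `G(Q)` has a nonnegative diagonal, so `J_w(P) ≥ π_min tr G(Q)`; moreover
`J_w(P) ≤ π_max n J(P)`.

The Laplacian of `C = n Pᵀ Π P` is `n Π (1 - Q)`, so `X = n⁻¹ G(Q) Π⁻¹` satisfies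
`X L(C) = 1 - E` and `R_ab(C) = X_aa - X_ab - X_ba + X_bb`. Averaging against `π ⊗ π` kills the
cross terms because `πᵀ G(Q) = 0`, leaving `∑ π_a π_b R_ab(C) = (2 / n) tr G(Q)`.
-/

section Monoid

variable {M : Type*} [Monoid M] {a e : M}

lemma pow_mul_eq_of_mul_eq (h : a * e = e) (t : ℕ) : a ^ t * e = e := by
  have : SemiconjBy e 1 a := by rw [SemiconjBy, mul_one, h]
  simpa using (this.pow_right t).eq.symm

lemma mul_pow_eq_of_mul_eq (h : e * a = e) (t : ℕ) : e * a ^ t = e := by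
  have : SemiconjBy e a 1 := by rw [SemiconjBy, one_mul, h]
  simpa using (this.pow_right t).eq

end Monoid

section ErgodicProj

variable {ι : Type*} [Fintype ι] {A : Matrix ι ι ℝ} {w : ι → ℝ}

/-- The rank-one matrix `𝟙 wᵀ`, which is the limit of the powers of a consensus matrix with
invariant measure `w`. -/
noncomputable def ergodicProj {ι : Type*} (w : ι → ℝ) : Matrix ι ι ℝ :=
  vecMulVec 1 w

@[simp]
lemma ergodicProj_apply {ι : Type*} (w : ι → ℝ) (i j : ι) : ergodicProj w i j = w j := by
  simp [ergodicProj, vecMulVec_apply]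

lemma mul_ergodicProj (h : A *ᵥ 1 = 1) : A * ergodicProj w = ergodicProj w := by
  rw [ergodicProj, mul_vecMulVec, h]

lemma ergodicProj_mul (h : w ᵥ* A = w) : ergodicProj w * A = ergodicProj w := by
  rw [ergodicProj, vecMulVec_mul, h]

lemma ergodicProj_mulVec_one (hw : ∑ i, w i = 1) : ergodicProj w *ᵥ 1 = 1 := by
  ext i
  simp [mulVec, dotProduct, hw]

lemma transpose_ergodicProj_mul_diagonal [DecidableEq ι] :
    (ergodicProj w)ᵀ * diagonal w = diagonal w * ergodicProj w := by
  ext i j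
  simp

lemma transpose_sub_mul_diagonal_mul_sub [DecidableEq ι]
    (hwA : ergodicProj w * A = ergodicProj w) (hw : ∑ i, w i = 1) :
    (A - ergodicProj w)ᵀ * diagonal w * (A - ergodicProj w) =
      Aᵀ * diagonal w * A - diagonal w * ergodicProj w := by
  have hEA : (ergodicProj w)ᵀ * diagonal w * A = diagonal w * ergodicProj w := by
    rw [transpose_ergodicProj_mul_diagonal, mul_assoc, hwA]
  have hAE : Aᵀ * diagonal w * ergodicProj w = diagonal w * ergodicProj w := by
    rw [mul_assoc, ← transpose_ergodicProj_mul_diagonal, ← mul_assoc, ← transpose_mul,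
      hwA]
  have hEE : (ergodicProj w)ᵀ * diagonal w * ergodicProj w = diagonal w * ergodicProj w := by
    rw [transpose_ergodicProj_mul_diagonal, mul_assoc, mul_ergodicProj (ergodicProj_mulVec_one hw)]
  rw [transpose_sub, sub_mul, sub_mul, mul_sub, mul_sub, hEA, hAE, hEE, sub_self, sub_zero]

lemma trace_transpose_mul_diagonal_mul [DecidableEq ι] (A : Matrix ι ι ℝ) (w : ι → ℝ) :
    trace (Aᵀ * diagonal w * A) = ∑ i, ∑ j, w i * A i j ^ 2 := by
  rw [Finset.sum_comm]
  simp only [trace, diag_apply, mul_apply (M := Aᵀ * diagonal w), mul_diagonal, transpose_apply]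
  exact Finset.sum_congr rfl fun j _ => Finset.sum_congr rfl fun i _ => by ring

end ErgodicProj

section NonnegMatrix

variable {ι : Type*} [Fintype ι] {A B : Matrix ι ι ℝ}

lemma mul_apply_pos_iff (hA : ∀ i j, 0 ≤ A i j) (hB : ∀ i j, 0 ≤ B i j) {i j : ι} :
    0 < (A * B) i j ↔ ∃ k, 0 < A i k ∧ 0 < B k j := by
  rw [mul_apply, Finset.sum_pos_iff_of_nonneg fun k _ => mul_nonneg (hA i k) (hB k j)]
  refine ⟨fun ⟨k, _, hk⟩ => ⟨k, ?_, ?_⟩,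
    fun ⟨k, hik, hkj⟩ => ⟨k, Finset.mem_univ k, mul_pos hik hkj⟩⟩
  · exact pos_of_mul_pos_left hk (hB k j)
  · exact pos_of_mul_pos_right hk (hA i k)

variable [DecidableEq ι]

lemma pow_apply_pos_of_support_subset (hA : ∀ i j, 0 ≤ A i j) (hB : ∀ i j, 0 ≤ B i j)
    (hAB : ∀ i j, 0 < A i j → 0 < B i j) (k : ℕ) {i j : ι} (h : 0 < (A ^ k) i j) :
    0 < (B ^ k) i j := by
  induction k generalizing j with
  | zero => simpa using h
  | succ k ih =>
    rw [pow_succ, mul_apply_pos_iff (pow_apply_nonneg hA k) hA] at h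
    rw [pow_succ, mul_apply_pos_iff (pow_apply_nonneg hB k) hB]
    obtain ⟨l, hil, hlj⟩ := h
    exact ⟨l, ih hil, hAB l j hlj⟩

lemma pow_apply_pos_mono (hA : ∀ i j, 0 ≤ A i j) (hdiag : ∀ i, 0 < A i i) {k m : ℕ} (hkm : k ≤ m)
    {i j : ι} (h : 0 < (A ^ k) i j) : 0 < (A ^ m) i j := by
  induction m, hkm using Nat.le_induction with
  | base => exact h
  | succ m _ ih =>
    rw [pow_succ, mul_apply_pos_iff (pow_apply_nonneg hA m) hA]
    exact ⟨j, ih, hdiag j⟩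

lemma exists_pow_succ_apply_pos (hA : ∀ i j, 0 ≤ A i j) (hdiag : ∀ i, 0 < A i i)
    (hirr : ∀ i j, ∃ k : ℕ, 0 < (A ^ k) i j) : ∃ m : ℕ, ∀ i j, 0 < (A ^ (m + 1)) i j := by
  choose k hk using hirr
  refine ⟨∑ i, ∑ j, k i j, fun i j => pow_apply_pos_mono hA hdiag ?_ (hk i j)⟩
  calc k i j ≤ ∑ j, k i j := Finset.single_le_sum_of_canonicallyOrdered (Finset.mem_univ j)
    _ ≤ ∑ i, ∑ j, k i j := Finset.single_le_sum_of_canonicallyOrdered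
        (f := fun i => ∑ j, k i j) (Finset.mem_univ i)
    _ ≤ _ := Nat.le_succ _

end NonnegMatrix

section Doeblin

open scoped Matrix.Norms.Operator

-- Doeblin's minorization, in a ring: `(a ^ m) ^ k - e = (a ^ m - c) ^ k * (1 - e)` decays
-- geometrically in `k`.
lemma summable_pow_sub_of_norm_pow_sub_lt_one {R : Type*} [NormedRing R] [CompleteSpace R]
    {a e c : R} (hae : a * e = e) (hea : e * a = e) (hce : c * e = c) {m : ℕ} [NeZero m]
    (h : ‖a ^ m - c‖ < 1) : Summable fun t : ℕ => a ^ t - e := by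
  have hc_pow (t : ℕ) : c * a ^ t = c := by
    rw [← hce, mul_assoc, mul_pow_eq_of_mul_eq hea]
  have hblock (k : ℕ) : (a ^ m - c) ^ k * (1 - e) = a ^ (m * k) - e := by
    induction k with
    | zero => simp
    | succ k ih =>
      rw [pow_succ', mul_assoc, ih, sub_mul, mul_sub, mul_sub, hc_pow, hce,
        pow_mul_eq_of_mul_eq hae, sub_self, sub_zero, ← pow_add, Nat.mul_succ, add_comm]
  have hterm (p : ℕ × Fin m) :
      (a ^ m - c) ^ p.1 * ((1 - e) * a ^ (p.2 : ℕ)) = a ^ (Nat.divModEquiv m).symm p - e := by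
    rw [← mul_assoc, hblock, sub_mul, mul_pow_eq_of_mul_eq hea, ← pow_add,
      Nat.divModEquiv_symm_apply, mul_comm]
  rw [← (Nat.divModEquiv m).symm.summable_iff]
  exact (summable_mul_of_summable_norm (summable_norm_geometric_of_norm_lt_one h)
    (g := fun r : Fin m => (1 - e) * a ^ (r : ℕ)) Summable.of_finite).congr hterm

lemma exists_norm_sub_smul_ergodicProj_lt_one {ι : Type*} [Fintype ι] [DecidableEq ι]
    {A : Matrix ι ι ℝ} {w : ι → ℝ} (hA : A *ᵥ 1 = 1) (hpos : ∀ i j, 0 < A i j)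
    (hw : ∀ i, 0 ≤ w i) (hw_sum : ∑ i, w i = 1) : ∃ δ : ℝ, ‖A - δ • ergodicProj w‖ < 1 := by
  have : Nonempty ι := by
    by_contra hempty
    simp [not_nonempty_iff.mp hempty] at hw_sum
  obtain ⟨⟨a, b⟩, hmin⟩ := Finite.exists_min fun p : ι × ι => A p.1 p.2
  have hentry (i j : ι) : 0 ≤ (A - A a b • ergodicProj w) i j := by
    have hwj : w j ≤ 1 := hw_sum ▸ Finset.single_le_sum (fun k _ => hw k) (Finset.mem_univ j)
    have hle : A a b * w j ≤ A i j :=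
      (mul_le_of_le_one_right (hpos a b).le hwj).trans (hmin (i, j))
    simpa using hle
  have hrow (i : ι) : ∑ j, ‖(A - A a b • ergodicProj w) i j‖ = 1 - A a b := by
    have hAi : ∑ j, A i j = 1 := by simpa [mulVec, dotProduct] using congrFun hA i
    simp only [Real.norm_of_nonneg (hentry i _)]
    simp only [Matrix.sub_apply, Matrix.smul_apply, ergodicProj_apply,
      smul_eq_mul, Finset.sum_sub_distrib, ← Finset.mul_sum, hAi, hw_sum, mul_one]
  refine ⟨A a b, ?_⟩
  rw [linfty_opNorm_def, ← NNReal.coe_one, NNReal.coe_lt_coe, Finset.sup_lt_iff zero_lt_one]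
  intro i _
  rw [← NNReal.coe_lt_coe]
  push_cast
  rw [hrow]
  linarith [hpos a b]

lemma summable_pow_sub_ergodicProj {ι : Type*} [Fintype ι] [DecidableEq ι]
    {A : Matrix ι ι ℝ} {w : ι → ℝ} (hA : A ∈ rowStochastic ℝ ι) (hwA : w ᵥ* A = w)
    (hw : ∀ i, 0 ≤ w i) (hw_sum : ∑ i, w i = 1) {m : ℕ} [NeZero m]
    (hpos : ∀ i j, 0 < (A ^ m) i j) :
    Summable fun t : ℕ => A ^ t - ergodicProj w := by
  obtain ⟨δ, hδ⟩ := exists_norm_sub_smul_ergodicProj_lt_one (pow_mem hA m).2 hpos hw hw_sum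
  refine summable_pow_sub_of_norm_pow_sub_lt_one (mul_ergodicProj hA.2) (ergodicProj_mul hwA) ?_ hδ
  rw [smul_mul_assoc, mul_ergodicProj (ergodicProj_mulVec_one hw_sum)]

end Doeblin

section Consensus

variable {n : ℕ} {P : Matrix (Fin n) (Fin n) ℝ} {mu : Fin n → ℝ}

lemma IsConsensus.mem_rowStochastic (hP : IsConsensus P) : P ∈ rowStochastic ℝ (Fin n) :=
  mem_rowStochastic_iff_sum.2 ⟨hP.1, hP.2.1⟩

lemma IsInvMeasure.vecMul_eq (hmu : IsInvMeasure P mu) : mu ᵥ* P = mu :=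
  funext hmu.2.2

lemma IsInvMeasure.ergodicProj_mul_pow (hmu : IsInvMeasure P mu) (t : ℕ) :
    ergodicProj mu * P ^ t = ergodicProj mu :=
  mul_pow_eq_of_mul_eq (ergodicProj_mul hmu.vecMul_eq) t

lemma IsConsensus.summable_pow_sub (hP : IsConsensus P) (hmu : IsInvMeasure P mu) :
    Summable fun t : ℕ => P ^ t - ergodicProj mu := by
  obtain ⟨m, hm⟩ := exists_pow_succ_apply_pos hP.1 hP.2.2.2 hP.2.2.1
  exact summable_pow_sub_ergodicProj hP.mem_rowStochastic hmu.vecMul_eq (fun i => (hmu.1 i).le)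
    hmu.2.1 hm

lemma IsConsensus.hasSum_green (hP : IsConsensus P) (hmu : IsInvMeasure P mu) :
    HasSum (fun t : ℕ => P ^ t - ergodicProj mu) (Green P mu) :=
  (hP.summable_pow_sub hmu).hasSum

lemma IsConsensus.green_mul_one_sub (hP : IsConsensus P) (hmu : IsInvMeasure P mu) :
    Green P mu * (1 - P) = 1 - ergodicProj mu := by
  have hstep (t : ℕ) : P ^ (t + 1) - ergodicProj mu = (P ^ t - ergodicProj mu) * P := by
    rw [sub_mul, ← pow_succ, ergodicProj_mul hmu.vecMul_eq]
  have hrec : Green P mu = 1 - ergodicProj mu + Green P mu * P := by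
    refine (hP.hasSum_green hmu).unique ?_
    rw [← pow_zero P, ← hasSum_nat_add_iff' 1]
    simpa [hstep] using (hP.hasSum_green hmu).mul_right P
  rw [mul_sub, mul_one, sub_eq_iff_eq_add]
  exact hrec

lemma IsConsensus.ergodicProj_mul_green (hP : IsConsensus P) (hmu : IsInvMeasure P mu) :
    ergodicProj mu * Green P mu = 0 := by
  refine ((hP.hasSum_green hmu).mul_left _).unique ?_
  simp only [mul_sub, hmu.ergodicProj_mul_pow, mul_ergodicProj (ergodicProj_mulVec_one hmu.2.1),
    sub_self, hasSum_zero]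

end Consensus

section TimeReversal

variable {n : ℕ} {P : Matrix (Fin n) (Fin n) ℝ} {mu : Fin n → ℝ}

lemma pstar_apply (i j : Fin n) : Pstar P mu i j = (mu i)⁻¹ * P j i * mu j := by
  simp [Pstar, mul_diagonal, diagonal_mul]

lemma diagonal_mul_pstar (hmu : ∀ i, mu i ≠ 0) : diagonal mu * Pstar P mu = Pᵀ * diagonal mu := by
  simp [Pstar, ← mul_assoc, diagonal_mul_diagonal, hmu]

lemma transpose_mul_diagonal_mul (hmu : ∀ i, mu i ≠ 0) :
    Pᵀ * diagonal mu * P = diagonal mu * (Pstar P mu * P) := by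
  rw [← mul_assoc, diagonal_mul_pstar hmu]

lemma diagonal_mul_pstar_mul_pow (hmu : ∀ i, mu i ≠ 0)
    (hcomm : Commute (Pstar P mu) P) (t : ℕ) :
    diagonal mu * (Pstar P mu * P) ^ t = (P ^ t)ᵀ * diagonal mu * P ^ t := by
  have hadj : SemiconjBy (diagonal mu) (Pstar P mu) Pᵀ := diagonal_mul_pstar hmu
  rw [hcomm.mul_pow, ← mul_assoc, (hadj.pow_right t).eq, transpose_pow]

lemma IsInvMeasure.pstar_mem_rowStochastic (hmu : IsInvMeasure P mu) (hP : ∀ i j, 0 ≤ P i j) :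
    Pstar P mu ∈ rowStochastic ℝ (Fin n) := by
  refine mem_rowStochastic_iff_sum.2 ⟨fun i j => ?_, fun i => ?_⟩
  · rw [pstar_apply]
    exact mul_nonneg (mul_nonneg (inv_nonneg.2 (hmu.1 i).le) (hP j i)) (hmu.1 j).le
  · calc ∑ j, Pstar P mu i j = (mu i)⁻¹ * ∑ j, mu j * P j i := by
          rw [Finset.mul_sum]
          exact Finset.sum_congr rfl fun j _ => by rw [pstar_apply]; ring
      _ = 1 := by rw [hmu.2.2, inv_mul_cancel₀ (hmu.1 i).ne']

lemma vecMul_pstar (hmu : ∀ i, mu i ≠ 0) (hP : P *ᵥ 1 = 1) : mu ᵥ* Pstar P mu = mu := by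
  calc mu ᵥ* Pstar P mu = 1 ᵥ* (diagonal mu * Pstar P mu) := by
        rw [← vecMul_vecMul]; congr 1; ext i; simp [vecMul_diagonal]
    _ = mu := by
        rw [diagonal_mul_pstar hmu, ← vecMul_vecMul, vecMul_transpose, hP]
        ext i; simp [vecMul_diagonal]

lemma IsInvMeasure.pstar_mul (hmu : IsInvMeasure P mu) (hP : P *ᵥ 1 = 1) :
    IsInvMeasure (Pstar P mu * P) mu := by
  refine ⟨hmu.1, hmu.2.1, congrFun (?_ : mu ᵥ* (Pstar P mu * P) = mu)⟩
  rw [← vecMul_vecMul, vecMul_pstar (fun i => (hmu.1 i).ne') hP, hmu.vecMul_eq]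

lemma IsConsensus.pstar_mul (hP : IsConsensus P) (hmu : IsInvMeasure P mu) :
    IsConsensus (Pstar P mu * P) := by
  have hPstar := hmu.pstar_mem_rowStochastic hP.1
  have hQ := mul_mem hPstar hP.mem_rowStochastic
  have hPstar_diag (i : Fin n) : 0 < Pstar P mu i i := by
    rw [pstar_apply]
    exact mul_pos (mul_pos (inv_pos.2 (hmu.1 i)) (hP.2.2.2 i)) (hmu.1 i)
  have hsupport (i j : Fin n) (hij : 0 < P i j) : 0 < (Pstar P mu * P) i j :=
    (mul_apply_pos_iff hPstar.1 hP.1).2 ⟨i, hPstar_diag i, hij⟩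
  refine ⟨hQ.1, sum_row_of_mem_rowStochastic hQ, fun i j => ?_, fun i => hsupport i i (hP.2.2.2 i)⟩
  obtain ⟨k, hk⟩ := hP.2.2.1 i j
  exact ⟨k, pow_apply_pos_of_support_subset hP.1 hQ.1 hsupport k hk⟩

lemma IsInvMeasure.diagonal_mul_pstar_mul_pow_sub (hmu : IsInvMeasure P mu)
    (hcomm : Commute (Pstar P mu) P) (t : ℕ) :
    diagonal mu * ((Pstar P mu * P) ^ t - ergodicProj mu) =
      (P ^ t - ergodicProj mu)ᵀ * diagonal mu * (P ^ t - ergodicProj mu) := by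
  rw [transpose_sub_mul_diagonal_mul_sub (hmu.ergodicProj_mul_pow t) hmu.2.1, mul_sub,
    diagonal_mul_pstar_mul_pow (fun i => (hmu.1 i).ne') hcomm]

end TimeReversal

section EffectiveResistance

variable {n : ℕ} {C X : Matrix (Fin n) (Fin n) ℝ} {w : Fin n → ℝ}

lemma lap_mulVec_apply (C : Matrix (Fin n) (Fin n) ℝ) (v : Fin n → ℝ) (i : Fin n) :
    (lap C *ᵥ v) i = ∑ j, C i j * (v i - v j) := by
  simp only [lap, sub_mulVec, Pi.sub_apply, mulVec_diagonal, mul_sub, Finset.sum_sub_distrib,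
    Finset.sum_mul]
  rfl

lemma dotProduct_lap_mulVec (hC : C.IsSymm) (v : Fin n → ℝ) :
    v ⬝ᵥ lap C *ᵥ v = 1 / 2 * ∑ i, ∑ j, C i j * (v i - v j) ^ 2 := by
  have henergy : v ⬝ᵥ lap C *ᵥ v = ∑ i, ∑ j, C i j * (v i * (v i - v j)) := by
    simp only [dotProduct, lap_mulVec_apply, Finset.mul_sum]
    exact Finset.sum_congr rfl fun i _ => Finset.sum_congr rfl fun j _ => by ring
  have hswap : v ⬝ᵥ lap C *ᵥ v = ∑ i, ∑ j, C i j * (v j * (v j - v i)) := by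
    rw [henergy, Finset.sum_comm]
    simp only [hC.apply]
  have hsq : ∑ i, ∑ j, C i j * (v i - v j) ^ 2 = v ⬝ᵥ lap C *ᵥ v + v ⬝ᵥ lap C *ᵥ v := by
    nth_rw 1 [henergy, hswap]
    simp only [← Finset.sum_add_distrib]
    exact Finset.sum_congr rfl fun i _ => Finset.sum_congr rfl fun j _ => by ring
  rw [hsq]
  ring

lemma transpose_lap (hC : C.IsSymm) : (lap C)ᵀ = lap C := by
  rw [lap, transpose_sub, diagonal_transpose, hC.eq]

lemma effRes_eq_or_eq_zero (C : Matrix (Fin n) (Fin n) ℝ) (a b : Fin n) :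
    (∃ v, lap C *ᵥ v = Pi.single a 1 - Pi.single b 1 ∧ effRes C a b = v a - v b) ∨
      effRes C a b = 0 := by
  unfold effRes
  split_ifs with h
  · exact .inl ⟨_, h.choose_spec, rfl⟩
  · exact .inr rfl

lemma effRes_nonneg (hC : C.IsSymm) (hC_nonneg : ∀ i j, 0 ≤ C i j) (a b : Fin n) :
    0 ≤ effRes C a b := by
  obtain ⟨v, hv, hR⟩ | hR := effRes_eq_or_eq_zero C a b
  · have henergy : effRes C a b = v ⬝ᵥ lap C *ᵥ v := by
      rw [hR, hv, dotProduct_sub, dotProduct_single_one, dotProduct_single_one]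
    rw [henergy, dotProduct_lap_mulVec hC]
    exact mul_nonneg (by norm_num) (Finset.sum_nonneg fun i _ => Finset.sum_nonneg fun j _ =>
      mul_nonneg (hC_nonneg i j) (sq_nonneg _))
  · exact hR.ge

lemma effRes_eq_of_mul_lap (hC : C.IsSymm) (hX : X * lap C = 1 - ergodicProj w) (a b : Fin n) :
    effRes C a b = X a a - X a b - X b a + X b b := by
  set e : Fin n → ℝ := Pi.single a 1 - Pi.single b 1 with he
  have hsolvable : ∃ v, lap C *ᵥ v = e := by
    have hX' : lap C * Xᵀ = 1 - (ergodicProj w)ᵀ := by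
      rw [← transpose_lap hC, ← transpose_mul, hX, transpose_sub, transpose_one]
    refine ⟨Xᵀ *ᵥ e, ?_⟩
    rw [mulVec_mulVec, hX', sub_mulVec, one_mulVec, sub_eq_self]
    ext i
    simp [he, mulVec_sub]
  have hdiff {v : Fin n → ℝ} (hv : lap C *ᵥ v = e) : v a - v b = (X *ᵥ e) a - (X *ᵥ e) b := by
    have hEv : (ergodicProj w *ᵥ v) a = (ergodicProj w *ᵥ v) b := by simp [mulVec]
    rw [← hv, mulVec_mulVec, hX, sub_mulVec, one_mulVec, Pi.sub_apply, Pi.sub_apply, hEv]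
    ring
  rw [effRes, dif_pos hsolvable, hdiff hsolvable.choose_spec]
  simp only [he, mulVec_sub, mulVec_single_one, Pi.sub_apply, col_apply]
  ring

lemma sum_sum_mul_effRes (hC : C.IsSymm) (hX : X * lap C = 1 - ergodicProj w)
    (hwX : ergodicProj w * X = 0) (hw : ∑ i, w i = 1) :
    ∑ a, ∑ b, w a * w b * effRes C a b = 2 * ∑ a, w a * X a a := by
  have hcol (b : Fin n) : ∑ a, w a * X a b = 0 := by
    simpa [mul_apply] using congrFun₂ hwX b b
  have hdiag : ∑ a, ∑ b, w a * w b * X a a = ∑ a, w a * X a a := by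
    refine Finset.sum_congr rfl fun a _ => ?_
    rw [← Finset.sum_mul, ← Finset.mul_sum, hw, mul_one]
  have hoff : ∑ a, ∑ b, w a * w b * X b a = 0 := by
    simp only [mul_assoc, ← Finset.mul_sum, hcol, mul_zero, Finset.sum_const_zero]
  have hdiag' : ∑ a, ∑ b, w a * w b * X b b = ∑ a, w a * X a a := by
    rw [Finset.sum_comm, ← hdiag]
    simp only [mul_comm (w _) (w _)]
  have hoff' : ∑ a, ∑ b, w a * w b * X a b = 0 := by
    rw [Finset.sum_comm, ← hoff]
    simp only [mul_comm (w _) (w _)]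
  simp only [effRes_eq_of_mul_lap hC hX, mul_add, mul_sub, Finset.sum_add_distrib,
    Finset.sum_sub_distrib, hdiag, hdiag', hoff, hoff']
  ring

lemma sq_mul_avgRes_le_sum_mul_diag (hC : C.IsSymm) (hC_nonneg : ∀ i j, 0 ≤ C i j)
    (hX : X * lap C = 1 - ergodicProj w) (hwX : ergodicProj w * X = 0) (hw : ∑ i, w i = 1)
    {m : ℝ} (hm : 0 ≤ m) (hmw : ∀ i, m ≤ w i) :
    (m * n) ^ 2 * avgRes C ≤ ∑ a, w a * X a a := by
  have hle : m ^ 2 * ∑ a, ∑ b, effRes C a b ≤ 2 * ∑ a, w a * X a a := by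
    rw [← sum_sum_mul_effRes hC hX hwX hw, Finset.mul_sum]
    refine Finset.sum_le_sum fun a _ => (Finset.mul_sum _ _ _).trans_le ?_
    refine Finset.sum_le_sum fun b _ => mul_le_mul_of_nonneg_right ?_
      (effRes_nonneg hC hC_nonneg a b)
    exact (sq m).trans_le (mul_le_mul (hmw a) (hmw b) hm (hm.trans (hmw a)))
  obtain rfl | hn := Nat.eq_zero_or_pos n
  · simp
  · have hn' : (n : ℝ) ≠ 0 := by positivity
    calc (m * n) ^ 2 * avgRes C = 1 / 2 * (m ^ 2 * ∑ a, ∑ b, effRes C a b) := by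
          rw [avgRes]; field_simp
      _ ≤ ∑ a, w a * X a a := by linarith

end EffectiveResistance

section Conductance

variable {n : ℕ} {P : Matrix (Fin n) (Fin n) ℝ} {mu : Fin n → ℝ}

lemma isSymm_smul_transpose_mul_diagonal_mul (c : ℝ) (P : Matrix (Fin n) (Fin n) ℝ)
    (mu : Fin n → ℝ) : (c • (Pᵀ * diagonal mu * P)).IsSymm := by
  simp [IsSymm, mul_assoc]

lemma lap_smul_diagonal_mul {Q : Matrix (Fin n) (Fin n) ℝ} (hQ : Q *ᵥ 1 = 1) (c : ℝ)
    (mu : Fin n → ℝ) : lap (c • (diagonal mu * Q)) = c • (diagonal mu * (1 - Q)) := by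
  have hrow (i : Fin n) : ∑ j, (c • (diagonal mu * Q)) i j = c * mu i := by
    have hQi : ∑ j, Q i j = 1 := by simpa [mulVec, dotProduct] using congrFun hQ i
    simp only [Matrix.smul_apply, diagonal_mul, smul_eq_mul, ← Finset.mul_sum, hQi, mul_one]
  rw [lap, mul_sub, mul_one, smul_sub, ← diagonal_smul]
  congr 2
  exact funext hrow

lemma IsConsensus.mul_avgRes_le_trace_green (hP : IsConsensus P) (hmu : IsInvMeasure P mu)
    (hn : n ≠ 0) {m : ℝ} (hm : 0 ≤ m) (hmmu : ∀ i, m ≤ mu i) :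
    m ^ 2 * n ^ 3 * avgRes ((n : ℝ) • (Pᵀ * diagonal mu * P)) ≤
      trace (Green (Pstar P mu * P) mu) := by
  have hmu_ne (i : Fin n) : mu i ≠ 0 := (hmu.1 i).ne'
  have hn' : (n : ℝ) ≠ 0 := Nat.cast_ne_zero.2 hn
  have hinv : diagonal mu⁻¹ * diagonal mu = 1 := by simp [diagonal_mul_diagonal, hmu_ne]
  have hQ := hP.pstar_mul hmu
  have hQmu := hmu.pstar_mul hP.mem_rowStochastic.2
  set X := (n : ℝ)⁻¹ • (Green (Pstar P mu * P) mu * diagonal mu⁻¹) with hX_def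
  have hX : X * lap ((n : ℝ) • (Pᵀ * diagonal mu * P)) = 1 - ergodicProj mu := by
    rw [transpose_mul_diagonal_mul hmu_ne, lap_smul_diagonal_mul hQ.mem_rowStochastic.2, hX_def,
      smul_mul_smul_comm, inv_mul_cancel₀ hn', one_smul, mul_assoc, ← mul_assoc (diagonal mu⁻¹),
      hinv, one_mul, hQ.green_mul_one_sub hQmu]
  have hmuX : ergodicProj mu * X = 0 := by
    rw [hX_def, mul_smul_comm, ← mul_assoc, hQ.ergodicProj_mul_green hQmu, zero_mul, smul_zero]
  have htrace : ∑ a, mu a * X a a = (n : ℝ)⁻¹ * trace (Green (Pstar P mu * P) mu) := by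
    simp only [trace, Finset.mul_sum]
    refine Finset.sum_congr rfl fun a _ => ?_
    simp only [hX_def, Matrix.smul_apply, mul_diagonal, smul_eq_mul, Pi.inv_apply, diag_apply]
    field_simp [hmu_ne a]
  have hC_nonneg (i j : Fin n) : 0 ≤ ((n : ℝ) • (Pᵀ * diagonal mu * P)) i j := by
    rw [transpose_mul_diagonal_mul hmu_ne, Matrix.smul_apply, diagonal_mul]
    exact mul_nonneg n.cast_nonneg (mul_nonneg (hmu.1 i).le (hQ.1 i j))
  have hbound := sq_mul_avgRes_le_sum_mul_diag (isSymm_smul_transpose_mul_diagonal_mul n P mu)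
    hC_nonneg hX hmuX hmu.2.1 hm hmmu
  rw [htrace, ← div_eq_inv_mul, le_div_iff₀ (by positivity)] at hbound
  linarith

end Conductance

section LQCost

variable {n : ℕ} {P : Matrix (Fin n) (Fin n) ℝ} {mu : Fin n → ℝ}

lemma IsConsensus.lqcostW_eq_tsum_trace (hP : IsConsensus P) (mu : Fin n → ℝ) :
    LQcostW P mu =
      ∑' t : ℕ, trace ((P ^ t - ergodicProj mu)ᵀ * diagonal mu * (P ^ t - ergodicProj mu)) := by
  have hdeflate (t : ℕ) : P ^ t * (1 - ergodicProj mu) = P ^ t - ergodicProj mu := by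
    rw [mul_sub, mul_one, pow_mul_eq_of_mul_eq (mul_ergodicProj hP.mem_rowStochastic.2)]
  have hvec : vecMulVec mu (fun _ => 1) = (ergodicProj mu)ᵀ := (transpose_vecMulVec _ _).symm
  rw [LQcostW, hvec]
  refine tsum_congr fun t => ?_
  rw [← hdeflate, transpose_mul, transpose_sub, transpose_one, transpose_pow, mul_assoc _ (P ^ t)]
  rfl

lemma IsConsensus.summable_sq_pow_sub_apply (hP : IsConsensus P) (hmu : IsInvMeasure P mu)
    (i j : Fin n) : Summable fun t : ℕ => (P ^ t - ergodicProj mu) i j ^ 2 := by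
  have hentry : Summable fun t : ℕ => (P ^ t - ergodicProj mu) i j :=
    Pi.summable.1 (Pi.summable.1 (hP.summable_pow_sub hmu) i) j
  simp only [sq]
  exact (summable_mul_of_summable_norm hentry.norm hentry.norm).comp_injective
    (i := fun t : ℕ => (t, t)) fun _ _ h => congrArg Prod.fst h

lemma IsConsensus.lqcostW_le (hP : IsConsensus P) (hmu : IsInvMeasure P mu) {M : ℝ}
    (hM : ∀ i, mu i ≤ M) : LQcostW P mu ≤ M * (n * LQcost P mu) := by
  obtain rfl | hn := Nat.eq_zero_or_pos n
  · simp [LQcostW]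
  have hsum (c : Fin n → ℝ) :
      Summable fun t : ℕ => ∑ i, ∑ j, c i * (P ^ t - ergodicProj mu) i j ^ 2 :=
    summable_sum fun i _ => summable_sum fun j _ =>
      (hP.summable_sq_pow_sub_apply hmu i j).mul_left _
  calc LQcostW P mu = ∑' t : ℕ, ∑ i, ∑ j, mu i * (P ^ t - ergodicProj mu) i j ^ 2 := by
        simp only [hP.lqcostW_eq_tsum_trace mu, trace_transpose_mul_diagonal_mul]
    _ ≤ ∑' t : ℕ, ∑ i, ∑ j, M * (P ^ t - ergodicProj mu) i j ^ 2 :=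
        (hsum mu).tsum_le_tsum (fun t => Finset.sum_le_sum fun i _ => Finset.sum_le_sum fun j _ =>
          mul_le_mul_of_nonneg_right (hM i) (sq_nonneg _)) (hsum fun _ => M)
    _ = M * (n * LQcost P mu) := by
        simp only [← Finset.mul_sum, tsum_mul_left]
        rw [LQcost, ← mul_assoc (n : ℝ), mul_one_div_cancel (by positivity), one_mul]
        rfl

lemma IsConsensus.hasSum_diagonal_mul_green (hP : IsConsensus P) (hmu : IsInvMeasure P mu)
    (hcomm : Commute (Pstar P mu) P) :
    HasSum (fun t : ℕ => (P ^ t - ergodicProj mu)ᵀ * diagonal mu * (P ^ t - ergodicProj mu))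
      (diagonal mu * Green (Pstar P mu * P) mu) := by
  simp only [← hmu.diagonal_mul_pstar_mul_pow_sub hcomm]
  exact ((hP.pstar_mul hmu).hasSum_green (hmu.pstar_mul hP.mem_rowStochastic.2)).mul_left _

lemma IsConsensus.lqcostW_eq_trace (hP : IsConsensus P) (hmu : IsInvMeasure P mu)
    (hcomm : Commute (Pstar P mu) P) :
    LQcostW P mu = trace (diagonal mu * Green (Pstar P mu * P) mu) := by
  rw [hP.lqcostW_eq_tsum_trace mu]
  exact ((hP.hasSum_diagonal_mul_green hmu hcomm).map (traceAddMonoidHom _ _)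
    (continuous_id.matrix_trace)).tsum_eq

lemma IsConsensus.green_pstar_mul_diag_nonneg (hP : IsConsensus P) (hmu : IsInvMeasure P mu)
    (hcomm : Commute (Pstar P mu) P) (i : Fin n) : 0 ≤ Green (Pstar P mu * P) mu i i := by
  have hpsd (t : ℕ) :
      0 ≤ ((P ^ t - ergodicProj mu)ᵀ * diagonal mu * (P ^ t - ergodicProj mu)) i i :=
    ((PosSemidef.diagonal fun k => (hmu.1 k).le).conjTranspose_mul_mul_same _).diag_nonneg
  have hdiag := HasSum.nonneg hpsd
    (Pi.hasSum.1 (Pi.hasSum.1 (hP.hasSum_diagonal_mul_green hmu hcomm) i) i)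
  rw [diagonal_mul] at hdiag
  exact nonneg_of_mul_nonneg_right hdiag (hmu.1 i)

lemma IsConsensus.mul_trace_green_le_lqcostW (hP : IsConsensus P) (hmu : IsInvMeasure P mu)
    (hcomm : Commute (Pstar P mu) P) {m : ℝ} (hm : ∀ i, m ≤ mu i) :
    m * trace (Green (Pstar P mu * P) mu) ≤ LQcostW P mu := by
  rw [hP.lqcostW_eq_trace hmu hcomm, trace, trace, Finset.mul_sum]
  refine Finset.sum_le_sum fun i _ => ?_
  rw [diag_apply, diag_apply, diagonal_mul]
  exact mul_le_mul_of_nonneg_right (hm i) (hP.green_pstar_mul_diag_nonneg hmu hcomm i)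

end LQCost

/-- Lower bounds on the LQ cost and weighted LQ cost when `P*P = PP*`. -/
theorem stmt10 {n : ℕ} (P : Matrix (Fin n) (Fin n) ℝ) (mu : Fin n → ℝ)
    (hP : IsConsensus P) (hmu : IsInvMeasure P mu)
    (hcomm : Pstar P mu * P = P * Pstar P mu)
    (mumin mumax : ℝ)
    (hmin : (∀ i, mumin ≤ mu i) ∧ ∃ i, mu i = mumin)
    (hmax : (∀ i, mu i ≤ mumax) ∧ ∃ i, mu i = mumax) :
    mumin ^ 3 * (n : ℝ) ^ 2 / mumax *
        avgRes ((n : ℝ) • (Pᵀ * Matrix.diagonal mu * P)) ≤ LQcost P mu ∧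
      mumin ^ 3 * (n : ℝ) ^ 3 *
        avgRes ((n : ℝ) • (Pᵀ * Matrix.diagonal mu * P)) ≤ LQcostW P mu := by
  obtain ⟨hmin_le, i, rfl⟩ := hmin
  obtain ⟨hle_max, k, rfl⟩ := hmax
  have hn : 0 < n := i.pos
  have hmin_pos := hmu.1 i
  have hmax_pos := hmu.1 k
  have hgreen := hP.mul_avgRes_le_trace_green hmu hn.ne' hmin_pos.le hmin_le
  have hweighted : mu i ^ 3 * (n : ℝ) ^ 3 * avgRes ((n : ℝ) • (Pᵀ * diagonal mu * P)) ≤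
      LQcostW P mu := by
    calc _ = mu i * (mu i ^ 2 * n ^ 3 * avgRes ((n : ℝ) • (Pᵀ * diagonal mu * P))) := by ring
      _ ≤ mu i * trace (Green (Pstar P mu * P) mu) := by gcongr
      _ ≤ LQcostW P mu := hP.mul_trace_green_le_lqcostW hmu hcomm hmin_le
  refine ⟨?_, hweighted⟩
  have hunweighted := hweighted.trans (hP.lqcostW_le hmu hle_max)
  rw [div_mul_eq_mul_div, div_le_iff₀ hmax_pos]
  refine le_of_mul_le_mul_left ?_ (Nat.cast_pos.2 hn : (0 : ℝ) < n)
  linarith
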